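/- arXiv:1906.07121 — 4 statements merged into one kernel-verified Lean document; each statement's English description precedes it below -/
import Mathlib

section
/- Let 𝒪 be an order of discriminant Δ in an imaginary quadratic field and N a positive integer. Then the cardinality of the unit group (𝒪/N𝒪)^× equals N² · ∏_{ℓ ∣ N} (1 − (Δ/ℓ)·(1/ℓ)) · (1 − 1/ℓ), where (Δ/ℓ) denotes the Kronecker symbol and the product runs over the distinct primes ℓ dividing N. -/
/-- The Kronecker symbol `(Δ/ℓ)` for `ℓ` prime: agrees with the Legendre/Jacobi symbol
at odd primes, with the standard extension at `ℓ = 2`. -/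
def kroneckerSym (Δ : ℤ) (ℓ : ℕ) : ℤ :=
  if ℓ = 2 then (if Δ % 2 = 0 then 0 else if Δ % 8 = 1 ∨ Δ % 8 = 7 then 1 else -1)
  else jacobiSym Δ ℓ

open QuadraticAlgebra in
def qaMap (a b : ℤ) (N : ℕ) :
    QuadraticAlgebra ℤ a b →+* QuadraticAlgebra (ZMod N) (a : ZMod N) (b : ZMod N) where
  toFun z := ⟨z.re, z.im⟩
  map_one' := by ext <;> simp
  map_zero' := by ext <;> simp
  map_add' x y := by ext <;> simp
  map_mul' x y := by ext <;> simp

theorem qaMap_surj (a b : ℤ) (N : ℕ) : Function.Surjective (qaMap a b N) := by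
  rintro ⟨x, y⟩
  obtain ⟨x, rfl⟩ := ZMod.intCast_surjective x
  obtain ⟨y, rfl⟩ := ZMod.intCast_surjective y
  exact ⟨⟨x, y⟩, rfl⟩

theorem qaMap_ker (a b : ℤ) (N : ℕ) : RingHom.ker (qaMap a b N) = Ideal.span {(N : QuadraticAlgebra ℤ a b)} := by
  ext ⟨x, y⟩
  rw [RingHom.mem_ker, Ideal.mem_span_singleton]
  have : (N : QuadraticAlgebra ℤ a b) = algebraMap ℤ _ (N : ℤ) := by simp
  rw [this, QuadraticAlgebra.algebraMap_dvd_iff]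
  simp [qaMap, QuadraticAlgebra.ext_iff, ZMod.intCast_zmod_eq_zero_iff_dvd]

noncomputable def cnt (c d : ℤ) (N : ℕ) : ℕ :=
  Nat.card {v : ZMod N × ZMod N // IsUnit (v.1 ^ 2 + d * v.1 * v.2 + c * v.2 ^ 2)}

noncomputable def unitsEquivIsUnitSub {M : Type*} [Monoid M] : Mˣ ≃ {x : M // IsUnit x} where
  toFun u := ⟨u, u.isUnit⟩
  invFun x := x.2.unit
  left_inv u := by ext; rfl
  right_inv x := by ext; rfl

theorem card_units_qa (c d : ℤ) (N : ℕ) :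
    Nat.card (QuadraticAlgebra (ZMod N) ((-c : ℤ) : ZMod N) (d : ZMod N))ˣ = cnt c d N := by
  rw [cnt, Nat.card_congr unitsEquivIsUnitSub]
  refine Nat.card_congr (Equiv.subtypeEquiv (QuadraticAlgebra.equivProd _ _) ?_)
  intro z
  rw [QuadraticAlgebra.isUnit_iff_norm_isUnit, QuadraticAlgebra.norm_def]
  simp only [QuadraticAlgebra.equivProd]
  apply iff_of_eq; congr 1; simp; ring

theorem card_units_order
    (K : Type*) [Field K] [CharZero K] (c d : ℤ) (hd : d ^ 2 - 4 * c < 0)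
    (τ : K) (hτ : τ ^ 2 - (d : K) * τ + (c : K) = 0) (N : ℕ) :
    Nat.card ((Subring.closure {τ} : Subring K) ⧸
        (Ideal.span {(N : (Subring.closure {τ} : Subring K))}))ˣ = cnt c d N := by
  have h1 : τ * τ = (-c) • (1 : K) + d • τ := by
    simp only [zsmul_eq_mul]; push_cast; linear_combination hτ
  let f : QuadraticAlgebra ℤ (-c) d →+* K := (QuadraticAlgebra.lift ⟨τ, h1⟩ : _ →ₐ[ℤ] K).toRingHom
  have hf : ∀ z, f z = z.re + z.im * τ := by intro z; simp [f]
  have hmem : ∀ z, f z ∈ Subring.closure {τ} := by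
    intro z
    rw [hf]
    exact add_mem (intCast_mem _ _) (mul_mem (intCast_mem _ _) (Subring.subset_closure rfl))
  have hrange : Subring.closure {τ} ≤ f.range := by
    rw [Subring.closure_le]
    rintro x rfl
    exact ⟨⟨0, 1⟩, by simp [hf]⟩
  have hinj : Function.Injective f := by
    rw [injective_iff_map_eq_zero]
    rintro ⟨x, y⟩ h
    rw [hf] at h
    simp only at h
    have h2 : ((x ^ 2 + d * x * y + c * y ^ 2 : ℤ) : K) = 0 := by
      push_cast
      linear_combination (x + d * y - y * τ) * h + y ^ 2 * hτ
    have h3 : x ^ 2 + d * x * y + c * y ^ 2 = 0 := by exact_mod_cast h2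
    have hy : y = 0 := by
      by_contra hy
      have : 0 < y ^ 2 := by positivity
      nlinarith [sq_nonneg (2 * x + d * y)]
    subst hy
    have hx : x = 0 := by simpa using h3
    subst hx
    rfl
  let e : QuadraticAlgebra ℤ (-c) d ≃+* (Subring.closure {τ} : Subring K) :=
    RingEquiv.ofBijective (f.codRestrict _ hmem) ⟨fun x y h => hinj (congrArg Subtype.val h), by
      rintro ⟨x, hx⟩
      obtain ⟨z, hz⟩ := hrange hx
      exact ⟨z, Subtype.ext hz⟩⟩
  let E := (Ideal.quotientEquiv (RingHom.ker (qaMap (-c) d N)) (Ideal.span {(N : (Subring.closure {τ} : Subring K))}) e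
    (by rw [qaMap_ker, Ideal.map_span]; simp)).symm.trans
      (RingHom.quotientKerEquivOfSurjective (qaMap_surj (-c) d N))
  rw [← card_units_qa]
  exact Nat.card_congr (Units.mapEquiv E.toMulEquiv).toEquiv

theorem cnt_mul (c d : ℤ) {m n : ℕ} (h : m.Coprime n) : cnt c d (m * n) = cnt c d m * cnt c d n := by
  rw [cnt, cnt, cnt, ← Nat.card_prod]
  let e := ZMod.chineseRemainder h
  refine Nat.card_congr (Equiv.trans (Equiv.subtypeEquiv ((Equiv.prodCongr e.toEquiv e.toEquiv).trans (Equiv.prodProdProdComm _ _ _ _)) ?_)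
    (Equiv.subtypeProdEquivProd (p := fun v : ZMod m × ZMod m => IsUnit (v.1 ^ 2 + d * v.1 * v.2 + c * v.2 ^ 2)) (q := fun v : ZMod n × ZMod n => IsUnit (v.1 ^ 2 + d * v.1 * v.2 + c * v.2 ^ 2))))
  rintro ⟨x, y⟩
  rw [← MulEquiv.isUnit_map e, Prod.isUnit_iff]
  simp

theorem unit_pp (p k : ℕ) [Fact p.Prime] (hk : 0 < k) (x : ZMod (p ^ k)) :
    IsUnit x ↔ ZMod.castHom (dvd_pow_self p hk.ne') (ZMod p) x ≠ 0 := by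
  obtain ⟨x, rfl⟩ := ZMod.intCast_surjective x
  have hp : p.Prime := Fact.out
  rw [map_intCast, Ne, ZMod.intCast_zmod_eq_zero_iff_dvd, ZMod.coe_int_isUnit_iff_isCoprime]
  push_cast
  rw [IsCoprime.pow_left_iff hk, (Nat.prime_iff_prime_int.mp hp).coprime_iff_not_dvd]

theorem cnt_pp (c d : ℤ) (p k : ℕ) [Fact p.Prime] (hk : 0 < k) :
    cnt c d (p ^ k) * p ^ 2 = (p ^ k) ^ 2 * cnt c d p := by
  classical
  let φ : ZMod (p ^ k) →+* ZMod p := ZMod.castHom (dvd_pow_self p hk.ne') (ZMod p)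
  have hφ : Function.Surjective φ := ZMod.ringHom_surjective φ
  have : NeZero (p ^ k) := ⟨pow_ne_zero _ (Fact.out : p.Prime).ne_zero⟩
  let ψ : ZMod (p ^ k) × ZMod (p ^ k) →+ ZMod p × ZMod p := (φ.prodMap φ).toAddMonoidHom
  have hψ : Function.Surjective ψ := hφ.prodMap hφ
  let S : Finset (ZMod p × ZMod p) := {v | IsUnit (v.1 ^ 2 + d * v.1 * v.2 + c * v.2 ^ 2)}
  let T : Finset (ZMod (p ^ k) × ZMod (p ^ k)) := {v | IsUnit (v.1 ^ 2 + d * v.1 * v.2 + c * v.2 ^ 2)}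
  have hS : cnt c d p = S.card := by
    rw [cnt, Nat.card_eq_fintype_card, Fintype.card_subtype]
  have hT : cnt c d (p ^ k) = T.card := by
    rw [cnt, Nat.card_eq_fintype_card, Fintype.card_subtype]
  have hTS : ∀ v, v ∈ T ↔ ψ v ∈ S := by
    rintro ⟨x, y⟩
    simp only [T, S, Finset.mem_filter, Finset.mem_univ, true_and]
    rw [unit_pp p k hk, isUnit_iff_ne_zero]
    have : ψ (x, y) = (φ x, φ y) := rfl
    rw [this]
    change φ _ ≠ 0 ↔ _
    simp only [map_add, map_mul, map_pow, map_intCast]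
  have hfib : ∀ b, (Finset.univ.filter fun a => ψ a = b).card = (Finset.univ.filter fun a => ψ a = 0).card :=
    fun b => AddMonoidHom.card_fiber_eq_of_mem_range ψ (hψ b) (hψ 0)
  have h1 : T.card = S.card * (Finset.univ.filter fun a => ψ a = 0).card := by
    rw [Finset.card_eq_sum_card_fiberwise (f := ψ) (t := S) (fun v hv => (hTS v).1 hv), ← smul_eq_mul, ← Finset.sum_const]
    refine Finset.sum_congr rfl fun b hb => ?_
    rw [← hfib b]
    congr 1
    ext v
    simp only [Finset.mem_filter, Finset.mem_univ, true_and, hTS]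
    constructor
    · exact fun h => h.2
    · rintro rfl; exact ⟨hb, rfl⟩
  have h2 : (p ^ k) ^ 2 = p ^ 2 * (Finset.univ.filter fun a => ψ a = 0).card := by
    have := Finset.card_eq_sum_card_fiberwise (f := ψ) (s := Finset.univ) (t := Finset.univ) (fun v hv => Finset.mem_coe.2 (Finset.mem_univ _))
    simp only [hfib, Finset.sum_const, Finset.card_univ, Fintype.card_prod, ZMod.card, smul_eq_mul] at this
    rw [sq, this]; ring
  rw [hS, hT, h1, h2]; ring

theorem roots_card (c d : ℤ) (Δ : ℤ) (p : ℕ) [Fact p.Prime] (h : d ^ 2 - 4 * c = Δ) :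
    ((Finset.univ.filter fun t : ZMod p => t ^ 2 + d * t + c = 0).card : ℤ) = 1 + kroneckerSym Δ p := by
  have hp : p.Prime := Fact.out
  by_cases h2 : p = 2
  · subst h2
    have hd : d % 2 = 0 ∨ d % 2 = 1 := by omega
    have hc : c % 2 = 0 ∨ c % 2 = 1 := by omega
    have key : ∀ x : ℤ, (x : ZMod 2) = ((x % 2 : ℤ) : ZMod 2) := fun x => by
      rw [ZMod.intCast_eq_intCast_iff]; exact (Int.mod_modEq x 2).symm
    rw [key d, key c, kroneckerSym, if_pos rfl]
    rcases hd with hd | hd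
    · have hΔ : Δ % 2 = 0 := by
        have : (2 : ℤ) ∣ d ^ 2 := Dvd.dvd.pow (Int.dvd_of_emod_eq_zero hd) two_ne_zero
        omega
      rw [if_pos hΔ]
      rcases hc with hc | hc <;> rw [hd, hc] <;> rfl
    · have h8 : d ^ 2 % 8 = 1 := by
        obtain ⟨k, hk⟩ : ∃ k, d = 2 * k + 1 := ⟨d / 2, by omega⟩
        obtain ⟨j, hj⟩ := Int.even_mul_succ_self k
        have : d ^ 2 = 8 * j + 1 := by rw [hk]; linear_combination 4 * hj
        omega
      rcases hc with hc | hc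
      · rw [if_neg (by omega), if_pos (by omega), hd, hc]; rfl
      · rw [if_neg (by omega), if_neg (by omega), hd, hc]; rfl
  · rw [kroneckerSym, if_neg h2, ← jacobiSym.legendreSym.to_jacobiSym, add_comm, ← legendreSym.card_sqrts p h2]
    have h20 : (2 : ZMod p) ≠ 0 := by
      intro h
      have : ((2 : ℕ) : ZMod p) = 0 := by exact_mod_cast h
      rw [ZMod.natCast_eq_zero_iff] at this
      exact h2 ((Nat.prime_dvd_prime_iff_eq hp Nat.prime_two).1 this)
    have hΔ : (Δ : ZMod p) = d ^ 2 - 4 * c := by rw [← h]; push_cast; rfl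
    norm_cast
    refine Finset.card_bij' (fun t _ => 2 * t + d) (fun s _ => (s - d) / 2) ?_ ?_ ?_ ?_
    · intro t ht
      simp at ht ⊢
      rw [hΔ]; linear_combination 4 * ht
    · intro s hs
      simp at hs ⊢
      rw [hΔ] at hs
      have h40 : (4 : ZMod p) ≠ 0 := by
        have : (4 : ZMod p) = 2 * 2 := by norm_num
        rw [this]; exact mul_ne_zero h20 h20
      field_simp
      linear_combination hs
    · intro t _; field_simp; ring
    · intro t _; field_simp; ring

theorem cnt_prime (c d : ℤ) (Δ : ℤ) (p : ℕ) [Fact p.Prime] (h : d ^ 2 - 4 * c = Δ) :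
    (cnt c d p : ℤ) = (p - 1) * (p - kroneckerSym Δ p) := by
  classical
  have hr := roots_card c d Δ p h
  set R := Finset.univ.filter fun t : ZMod p => t ^ 2 + d * t + c = 0 with hR
  let q : ZMod p × ZMod p → ZMod p := fun v => v.1 ^ 2 + d * v.1 * v.2 + c * v.2 ^ 2
  have hS : cnt c d p = (Finset.univ.filter fun v => ¬ q v = 0).card := by
    rw [cnt, Nat.card_eq_fintype_card, Fintype.card_subtype]
    simp only [isUnit_iff_ne_zero, q, Ne]
  have hz : (Finset.univ.filter fun v => q v = 0) =
      insert (0, 0) (((Finset.univ.filter fun y : ZMod p => y ≠ 0) ×ˢ R).image fun w => (w.2 * w.1, w.1)) := by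
    ext ⟨x, y⟩
    simp only [Finset.mem_filter, Finset.mem_univ, true_and, Finset.mem_insert, Finset.mem_image, Finset.mem_product, Prod.mk.injEq, Prod.exists, q, hR]
    constructor
    · intro hq
      by_cases hy : y = 0
      · left; subst hy; simpa using hq
      · right
        refine ⟨y, x / y, ⟨hy, ?_⟩, by field_simp, rfl⟩
        field_simp
        linear_combination hq
    · rintro (⟨rfl, rfl⟩ | ⟨a, b, ⟨ha, hb⟩, rfl, rfl⟩)
      · simp
      · linear_combination a ^ 2 * hb
  have hzc : (Finset.univ.filter fun v => q v = 0).card = (p - 1) * R.card + 1 := by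
    rw [hz, Finset.card_insert_of_notMem, Finset.card_image_of_injOn, Finset.card_product]
    · congr 2
      rw [Finset.filter_ne', Finset.card_erase_of_mem (Finset.mem_univ _), Finset.card_univ, ZMod.card]
    · rintro ⟨a, b⟩ hab ⟨a', b'⟩ hab' hh
      simp at hh hab
      obtain ⟨h1, rfl⟩ := hh
      simp only [Prod.mk.injEq, true_and]
      exact mul_right_cancel₀ hab.1 h1
    · simp
  have htot := Finset.card_filter_add_card_filter_not (s := (Finset.univ : Finset (ZMod p × ZMod p))) (fun v => q v = 0)
  rw [← hS, hzc, Finset.card_univ, Fintype.card_prod, ZMod.card] at htot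
  have hp1 : 1 ≤ p := (Fact.out : p.Prime).one_le
  zify [hp1] at htot
  rw [hr] at htot
  linear_combination htot

theorem cnt_formula (c d : ℤ) (Δ : ℤ) (h : d ^ 2 - 4 * c = Δ) (N : ℕ) (hN : 0 < N) :
    (cnt c d N : ℚ) = (N : ℚ) ^ 2 * ∏ ℓ ∈ N.primeFactors,
        ((1 - (kroneckerSym Δ ℓ : ℚ) / (ℓ : ℚ)) * (1 - 1 / (ℓ : ℚ))) := by
  induction N using Nat.recOnPosPrimePosCoprime with
  | zero => omega
  | one =>
    have : cnt c d 1 = 1 := by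
      rw [cnt, Nat.card_eq_one_iff_unique]
      exact ⟨inferInstance, ⟨⟨(0, 0), isUnit_of_subsingleton _⟩⟩⟩
    simp [this]
  | prime_pow p k hp hk =>
    have : Fact p.Prime := ⟨hp⟩
    have h1 : (cnt c d (p ^ k) : ℚ) * p ^ 2 = (p ^ k) ^ 2 * cnt c d p := by
      exact_mod_cast cnt_pp c d p k hk
    have h2 : (cnt c d p : ℚ) = (p - 1) * (p - kroneckerSym Δ p) := by
      exact_mod_cast cnt_prime c d Δ p h
    have hp0 : (p : ℚ) ≠ 0 := by exact_mod_cast hp.ne_zero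
    rw [Nat.primeFactors_prime_pow hk.ne' hp, Finset.prod_singleton]
    rw [h2] at h1
    push_cast
    apply mul_right_cancel₀ (pow_ne_zero 2 hp0)
    rw [h1]
    field_simp
  | coprime a b ha hb hab iha ihb =>
    rw [cnt_mul c d hab, hab.primeFactors_mul, Finset.prod_union hab.disjoint_primeFactors]
    push_cast
    rw [iha (by omega), ihb (by omega)]
    ring

theorem card_units_quotient_order
    (K : Type*) [Field K] [Algebra ℚ K]
    (hdim : Module.finrank ℚ K = 2) (himag : IsEmpty (K →+* ℝ))
    (Δ : ℤ) (hΔneg : Δ < 0) (hΔmod : Δ % 4 = 0 ∨ Δ % 4 = 1)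
    (τ : K) (hτ : τ ^ 2 - (Δ : K) * τ + (((Δ ^ 2 - Δ) / 4 : ℤ) : K) = 0)
    (N : ℕ) (hN : 0 < N) :
    (Nat.card ((Subring.closure {τ} : Subring K) ⧸
        (Ideal.span {(N : (Subring.closure {τ} : Subring K))}))ˣ : ℚ) =
      (N : ℚ) ^ 2 * ∏ ℓ ∈ N.primeFactors,
        ((1 - (kroneckerSym Δ ℓ : ℚ) / (ℓ : ℚ)) * (1 - 1 / (ℓ : ℚ))) := by
  have : CharZero K := algebraRat.charZero K
  have h4 : (4 : ℤ) ∣ Δ ^ 2 - Δ := by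
    have : Δ ^ 2 - Δ = Δ * (Δ - 1) := by ring
    rw [this]
    rcases hΔmod with h | h
    · exact Dvd.dvd.mul_right (Int.dvd_of_emod_eq_zero h) _
    · exact Dvd.dvd.mul_left (by omega) _
  have hd : Δ ^ 2 - 4 * ((Δ ^ 2 - Δ) / 4) = Δ := by
    rw [Int.mul_ediv_cancel' h4]; ring
  rw [card_units_order K _ Δ (by rw [hd]; exact hΔneg) τ hτ N]
  exact cnt_formula _ _ _ hd N hN
end

section
/- Let 𝒪 be an order of discriminant Δ in an imaginary quadratic field, let ℓ be an odd prime, and let a be a positive integer. Then there exists a primitive, proper, real ideal I of 𝒪 with index ℓ^a if and only if a = ord_ℓ(Δ), the ℓ-adic valuation of Δ. -/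
variable {K : Type*} [Field K]

/-- An ideal `I` of an order `O` in a quadratic field is *primitive*
if the additive quotient group `O/I` is cyclic. -/
def IsPrimitiveIdeal (O : Subring K) (I : Ideal O) : Prop :=
  IsAddCyclic (O ⧸ I)

/-- An ideal `I` of an order `O ⊆ K` is *proper* if its multiplier ring
`{x ∈ K : xI ⊆ I}` equals `O`. -/
def IsProperIdeal (O : Subring K) (I : Ideal O) : Prop :=
  ∀ x : K, (∀ y : O, y ∈ I → ∃ z : O, z ∈ I ∧ (z : K) = x * (y : K)) ↔ x ∈ O

/-- An ideal `I` of an order `O ⊆ K` is *real* (with respect to the nontrivial automorphism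
`σ` of `K`, i.e. complex conjugation) if it is stable under `σ`. -/
def IsRealIdeal (σ : K →+* K) (O : Subring K) (I : Ideal O) : Prop :=
  ∀ y : O, y ∈ I → ∃ z : O, z ∈ I ∧ (z : K) = σ (y : K)

theorem aux_indep {K : Type*} [Field K] [CharZero K] (Δ N : ℤ) (hΔneg : Δ < 0)
    (hN : 4 * N = Δ ^ 2 - Δ) (τ : K) (hτ : τ ^ 2 - (Δ : K) * τ + (N : K) = 0)
    (s t : ℚ) (h : (s : K) + t * τ = 0) : s = 0 ∧ t = 0 := by
  have hN' : (4 : K) * N = Δ ^ 2 - Δ := by exact_mod_cast congrArg (Int.cast : ℤ → K) hN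
  have h1 : ((2 * s + t * Δ) ^ 2 : K) = t ^ 2 * Δ := by
    have e : (s : K) = - (t * τ) := by linear_combination h
    rw [e]
    linear_combination 4 * (t : K) ^ 2 * hτ - (t : K) ^ 2 * hN'
  have h2 : (2 * s + t * Δ) ^ 2 = t ^ 2 * (Δ : ℚ) := by exact_mod_cast h1
  have hD : (Δ : ℚ) < 0 := by exact_mod_cast hΔneg
  have ht : t = 0 := by
    by_contra hne
    have : 0 < t ^ 2 := by positivity
    nlinarith [sq_nonneg (2 * s + t * (Δ : ℚ))]
  subst ht
  refine ⟨?_, rfl⟩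
  simpa using h

theorem aux_uniq {K : Type*} [Field K] [CharZero K] (Δ N : ℤ) (hΔneg : Δ < 0)
    (hN : 4 * N = Δ ^ 2 - Δ) (τ : K) (hτ : τ ^ 2 - (Δ : K) * τ + (N : K) = 0)
    (s t s' t' : ℤ) (h : (s : K) + t * τ = s' + t' * τ) : s = s' ∧ t = t' := by
  have := aux_indep Δ N hΔneg hN τ hτ ((s - s' : ℤ) : ℚ) ((t - t' : ℤ) : ℚ)
    (by push_cast; linear_combination h)
  have h1 : s - s' = 0 := by exact_mod_cast this.1
  have h2 : t - t' = 0 := by exact_mod_cast this.2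
  omega

theorem aux_sigma {K : Type*} [Field K] [Algebra ℚ K] [CharZero K]
    (hdim : Module.finrank ℚ K = 2)
    (σ : K →+* K) (hσ : σ ≠ RingHom.id K) (Δ N : ℤ) (hΔneg : Δ < 0)
    (hN : 4 * N = Δ ^ 2 - Δ) (τ : K) (hτ : τ ^ 2 - (Δ : K) * τ + (N : K) = 0) :
    σ τ = Δ - τ := by
  have h1 : (σ τ) ^ 2 - (Δ : K) * σ τ + (N : K) = 0 := by
    have := congrArg σ hτ
    simpa using this
  have h2 : (σ τ - τ) * (σ τ - (Δ - τ)) = 0 := by linear_combination h1 - hτ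
  rcases mul_eq_zero.1 h2 with h | h
  · exfalso
    apply hσ
    have hli : LinearIndependent ℚ ![(1 : K), τ] := by
      rw [LinearIndependent.pair_iff]
      intro s t hst
      apply aux_indep Δ N hΔneg hN τ hτ s t
      simpa [Algebra.smul_def] using hst
    have hsp := hli.span_eq_top_of_card_eq_finrank (by simp [hdim])
    ext z
    have hz : z ∈ Submodule.span ℚ (Set.range ![(1 : K), τ]) := by rw [hsp]; trivial
    rw [Matrix.range_cons, Matrix.range_cons, Matrix.range_empty, Set.union_empty,
      Set.singleton_union, Submodule.mem_span_pair] at hz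
    obtain ⟨a, b, rfl⟩ := hz
    simp [Algebra.smul_def, sub_eq_zero.1 h]
  · exact sub_eq_zero.1 h

theorem aux_mem {K : Type*} [Field K] (Δ N : ℤ) (τ : K)
    (hτ : τ ^ 2 - (Δ : K) * τ + (N : K) = 0) (z : K) :
    z ∈ Subring.closure {τ} ↔ ∃ x y : ℤ, z = x + y * τ := by
  constructor
  · intro hz
    induction hz using Subring.closure_induction with
    | mem x hx => 
      rw [Set.mem_singleton_iff] at hx
      exact ⟨0, 1, by simp [hx]⟩
    | zero => exact ⟨0, 0, by simp⟩
    | one => exact ⟨1, 0, by simp⟩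
    | add a b _ _ h1 h2 =>
      obtain ⟨x, y, rfl⟩ := h1
      obtain ⟨x', y', rfl⟩ := h2
      exact ⟨x + x', y + y', by push_cast; ring⟩
    | neg a _ h1 =>
      obtain ⟨x, y, rfl⟩ := h1
      exact ⟨-x, -y, by push_cast; ring⟩
    | mul a b _ _ h1 h2 =>
      obtain ⟨x, y, rfl⟩ := h1
      obtain ⟨x', y', rfl⟩ := h2
      exact ⟨x * x' - y * y' * N, x * y' + y * x' + y * y' * Δ, by
        push_cast; linear_combination (y : K) * y' * hτ⟩
  · rintro ⟨x, y, rfl⟩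
    have : τ ∈ Subring.closure {τ} := Subring.subset_closure (by simp)
    exact add_mem (intCast_mem _ _) (mul_mem (intCast_mem _ _) this)

theorem aux_fwd {K : Type*} [Field K] [CharZero K] (σ : K →+* K)
    (Δ N : ℤ) (hΔneg : Δ < 0)
    (hN : 4 * N = Δ ^ 2 - Δ) (τ : K) (hτ : τ ^ 2 - (Δ : K) * τ + (N : K) = 0)
    (hστ : σ τ = Δ - τ) (O : Subring K) (hO : ∀ z : K, z ∈ O ↔ ∃ x y : ℤ, z = x + y * τ)
    (ℓ : ℕ) (hℓ : ℓ.Prime) (hodd : ℓ ≠ 2) (a : ℕ) (ha : 0 < a) (I : Ideal O)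
    (h1 : IsPrimitiveIdeal O I) (h2 : IsProperIdeal O I) (h3 : IsRealIdeal σ O I)
    (h4 : Nat.card (O ⧸ I) = ℓ ^ a) :
    ((ℓ : ℤ) ^ a ∣ Δ) ∧ ¬ ((ℓ : ℤ) ^ (a + 1) ∣ Δ) := by
  have : Finite (O ⧸ I) := Nat.finite_of_card_ne_zero (by rw [h4]; exact pow_ne_zero _ hℓ.ne_zero)
  have hord : addOrderOf (1 : O ⧸ I) = ℓ ^ a := by
    obtain ⟨g, hg⟩ := h1.exists_zsmul_surjective
    rw [← h4]
    apply Nat.dvd_antisymm (addOrderOf_dvd_natCard _)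
    rw [← addOrderOf_eq_card_of_forall_mem_zmultiples (g := g)
      (fun x => by obtain ⟨k, hk⟩ := hg x; exact ⟨k, hk⟩)]
    apply addOrderOf_dvd_of_nsmul_eq_zero
    have := addOrderOf_nsmul_eq_zero (1 : O ⧸ I)
    rw [nsmul_eq_mul, mul_one] at this
    rw [nsmul_eq_mul, this, zero_mul]
  have hint : ∀ k : ℤ, ((k : O) ∈ I) ↔ (ℓ : ℤ) ^ a ∣ k := by
    intro k
    have := addOrderOf_dvd_iff_zsmul_eq_zero (x := (1 : O ⧸ I)) (i := k)
    rw [hord, zsmul_eq_mul, mul_one] at this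
    push_cast at this
    rw [this, ← Ideal.Quotient.eq_zero_iff_mem, map_intCast]
  have htop : AddSubgroup.zmultiples (1 : O ⧸ I) = ⊤ :=
    AddSubgroup.eq_top_of_card_eq _ (by rw [Nat.card_zmultiples, hord, h4])
  have hτO : τ ∈ O := (hO τ).2 ⟨0, 1, by simp⟩
  obtain ⟨t, ht⟩ : ∃ t : ℤ, (⟨τ, hτO⟩ - (t : O) : O) ∈ I := by
    have : (Ideal.Quotient.mk I ⟨τ, hτO⟩) ∈ AddSubgroup.zmultiples (1 : O ⧸ I) := by
      rw [htop]; trivial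
    obtain ⟨t, ht⟩ := this
    refine ⟨t, ?_⟩
    rw [← Ideal.Quotient.eq_zero_iff_mem, map_sub, map_intCast, ← ht]
    simp
  set β : O := ⟨τ, hτO⟩ - (t : O) with hβ
  have hβK : (β : K) = τ - t := by simp [hβ]
  have d1 : (ℓ : ℤ) ^ a ∣ Δ - 2 * t := by
    rw [← hint]
    obtain ⟨z, hz, hz'⟩ := h3 β ht
    have : ((Δ - 2 * t : ℤ) : O) = z + β := by
      apply Subtype.ext
      push_cast
      rw [show ((2 : O) : K) = 2 from rfl, hz', hβK, map_sub, hστ, map_intCast]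
      ring
    rw [this]
    exact add_mem hz ht
  have d2 : (ℓ : ℤ) ^ a ∣ t ^ 2 - Δ * t + N := by
    rw [← hint]
    have : ((t ^ 2 - Δ * t + N : ℤ) : O) = ((Δ - 2 * t : ℤ) : O) * β - β * β := by
      apply Subtype.ext
      push_cast
      rw [show ((2 : O) : K) = 2 from rfl, hβK]
      linear_combination hτ
    rw [this]
    exact sub_mem (I.mul_mem_left _ ht) (I.mul_mem_left _ ht)
  have key : 4 * (t ^ 2 - Δ * t + N) = (Δ - 2 * t) ^ 2 - Δ := by linear_combination hN
  have hcop : ∀ m, IsCoprime ((ℓ : ℤ) ^ m) 4 := by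
    intro m
    apply IsCoprime.pow_left
    have : Nat.Coprime ℓ (2 ^ 2) :=
      Nat.Coprime.pow_right _ ((Nat.coprime_primes hℓ Nat.prime_two).2 hodd)
    exact_mod_cast Nat.isCoprime_iff_coprime.2 this
  refine ⟨?_, ?_⟩
  · have : Δ = (Δ - 2 * t) * (Δ - 2 * t) - 4 * (t ^ 2 - Δ * t + N) := by rw [key]; ring
    rw [this]
    exact dvd_sub (d1.mul_left _) (d2.mul_left _)
  · intro hd
    have d3 : (ℓ : ℤ) ^ (a + 1) ∣ t ^ 2 - Δ * t + N := by
      apply (hcop (a + 1)).dvd_of_dvd_mul_left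
      rw [key, sq]
      refine dvd_sub ?_ hd
      rw [pow_succ]
      exact mul_dvd_mul d1 ((dvd_pow_self _ ha.ne').trans d1)
    obtain ⟨c, hc⟩ := d3
    obtain ⟨d, hdd⟩ := (dvd_pow_self _ ha.ne').trans d1
    have hl0 : (ℓ : K) ≠ 0 := by exact_mod_cast hℓ.ne_zero
    have hx : (β : K) / ℓ ∈ O := by
      rw [← h2]
      intro y hy
      obtain ⟨x, w, hxw⟩ := (hO y).1 y.2
      have hy' : y = ((x + w * t : ℤ) : O) + (w : O) * β := by
        apply Subtype.ext
        push_cast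
        rw [hβK, hxw]
        ring
      have : ((x + w * t : ℤ) : O) ∈ I := by
        have e : ((x + w * t : ℤ) : O) = y - (w : O) * β := by rw [hy']; ring
        rw [e]
        exact sub_mem hy (I.mul_mem_left _ ht)
      obtain ⟨u, hu⟩ := (hint _).1 this
      obtain ⟨b, rfl⟩ : ∃ b, a = b + 1 := ⟨a - 1, by omega⟩
      refine ⟨((u * ℓ ^ b + w * d : ℤ) : O) * β - ((w * c * ℓ ^ (b + 1) : ℤ) : O), ?_, ?_⟩
      · refine sub_mem (I.mul_mem_left _ ht) ((hint _).2 (Dvd.intro_left _ rfl))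
      · rw [hy', hu]
        push_cast
        rw [hβK]
        have hc' : (t ^ 2 - Δ * t + N : K) = ℓ ^ (b + 1 + 1) * c := by exact_mod_cast congrArg (Int.cast : ℤ → K) hc
        have hd' : (Δ - 2 * t : K) = ℓ * d := by exact_mod_cast congrArg (Int.cast : ℤ → K) hdd
        field_simp
        linear_combination (-(w:K)) * hτ + w * hc' - w * (τ - t) * hd'
    obtain ⟨x, y, hxy⟩ := (hO _).1 hx
    rw [hβK, div_eq_iff hl0] at hxy
    have := (aux_uniq Δ N hΔneg hN τ hτ (-t) 1 (x * ℓ) (y * ℓ) (by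
      push_cast; linear_combination hxy)).2
    have : (ℓ : ℤ) ∣ 1 := ⟨y, by linarith⟩
    have : ℓ ∣ 1 := by exact_mod_cast this
    exact hℓ.one_lt.ne' (Nat.dvd_one.1 this)

theorem aux_bwd {K : Type*} [Field K] [CharZero K] (σ : K →+* K)
    (Δ N : ℤ) (hΔneg : Δ < 0)
    (hN : 4 * N = Δ ^ 2 - Δ) (τ : K) (hτ : τ ^ 2 - (Δ : K) * τ + (N : K) = 0)
    (hστ : σ τ = Δ - τ) (O : Subring K) (hO : ∀ z : K, z ∈ O ↔ ∃ x y : ℤ, z = x + y * τ)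
    (n : ℕ) (hn0 : n ≠ 0) (N' : ℤ) (hn : (n : ℤ) ∣ Δ) (hN' : N = n * N')
    (hcop : IsCoprime (n : ℤ) N') :
    ∃ I : Ideal O, IsPrimitiveIdeal O I ∧ IsProperIdeal O I ∧ IsRealIdeal σ O I ∧
      Nat.card (O ⧸ I) = n := by
  have hNK : (N : K) = n * N' := by rw [hN']; push_cast; ring
  have hτO : τ ∈ O := (hO τ).2 ⟨0, 1, by simp⟩
  let I : Ideal O :=
    { carrier := {z | ∃ x y : ℤ, (z : K) = n * x + y * τ}
      zero_mem' := ⟨0, 0, by simp⟩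
      add_mem' := by
        rintro a b ⟨x, y, h⟩ ⟨x', y', h'⟩
        exact ⟨x + x', y + y', by push_cast; rw [h, h']; ring⟩
      smul_mem' := by
        rintro c z ⟨x, y, h⟩
        obtain ⟨p, q, hpq⟩ := (hO c).1 c.2
        refine ⟨p * x - q * y * N', p * y + q * n * x + q * y * Δ, ?_⟩
        rw [smul_eq_mul]
        push_cast
        rw [h, hpq]
        linear_combination (q : K) * y * hτ - q * y * hNK }
  have hI : ∀ z : O, z ∈ I ↔ ∃ x y : ℤ, (z : K) = n * x + y * τ := fun z => Iff.rfl
  have hgen : ∀ x : O ⧸ I, x ∈ AddSubgroup.zmultiples (1 : O ⧸ I) := by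
    intro x
    obtain ⟨z, rfl⟩ := Ideal.Quotient.mk_surjective x
    obtain ⟨p, q, hpq⟩ := (hO z).1 z.2
    refine ⟨p, ?_⟩
    have : (Ideal.Quotient.mk I) z = (Ideal.Quotient.mk I) (p : O) := by
      rw [Ideal.Quotient.eq, hI]
      exact ⟨0, q, by push_cast; rw [hpq]; ring⟩
    rw [this]
    simp
  have hint : ∀ k : ℤ, ((k : O) ∈ I) ↔ (n : ℤ) ∣ k := by
    intro k
    rw [hI]
    constructor
    · rintro ⟨x, y, h⟩
      have := (aux_uniq Δ N hΔneg hN τ hτ k 0 (n * x) y (by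
        push_cast at h ⊢; linear_combination h)).1
      exact ⟨x, this⟩
    · rintro ⟨x, rfl⟩
      exact ⟨x, 0, by push_cast; ring⟩
  refine ⟨I, ⟨1, hgen⟩, ?_, ?_, ?_⟩
  · intro x
    constructor
    · intro h
      obtain ⟨z, hz, hzx⟩ := h ((n : ℤ) : O) ((hint _).2 dvd_rfl)
      obtain ⟨w, hw, hwx⟩ := h ⟨τ, hτO⟩ ((hI _).2 ⟨0, 1, by simp⟩)
      obtain ⟨p, q, hpq⟩ := (hI _).1 hz
      obtain ⟨r, s, hrs⟩ := (hI _).1 hw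
      have hnK : (n : K) ≠ 0 := by exact_mod_cast hn0
      push_cast at hzx
      have e1 : n * p + q * τ = x * n := by rw [← hpq, hzx]
      have e2 : n * r + s * τ = x * τ := by rw [← hrs, hwx]
      have e3 := (aux_uniq Δ N hΔneg hN τ hτ (n * n * r) (n * s) (- (q * N)) (n * p + q * Δ) (by
        push_cast
        linear_combination (n : K) * e2 - τ * e1 + q * hτ)).1
      have hn0' : (n : ℤ) ≠ 0 := by exact_mod_cast hn0
      have e4 : (n : ℤ) * r = - (q * N') := by
        apply mul_left_cancel₀ hn0'
        rw [hN'] at e3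
        linear_combination e3
      have : (n : ℤ) ∣ q := by
        apply hcop.dvd_of_dvd_mul_right
        exact ⟨-r, by linear_combination e4⟩
      obtain ⟨q', rfl⟩ := this
      rw [hO]
      refine ⟨p, q', ?_⟩
      apply mul_right_cancel₀ hnK
      rw [← e1]
      push_cast
      ring
    · intro hx y hy
      exact ⟨⟨x, hx⟩ * y, I.mul_mem_left _ hy, rfl⟩
  · intro y hy
    obtain ⟨p, q, h⟩ := (hI _).1 hy
    obtain ⟨D, hD⟩ := hn
    have hD' : (Δ : K) = n * D := by rw [hD]; push_cast; ring
    have e : σ y = n * ((p + q * D : ℤ) : K) + ((-q : ℤ) : K) * τ := by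
      rw [h]
      simp only [map_add, map_mul, map_natCast, map_intCast, hστ]
      push_cast
      linear_combination (q : K) * hD'
    have : σ y ∈ O := (hO _).2 ⟨n * (p + q * D), -q, by rw [e]; push_cast; ring⟩
    exact ⟨⟨_, this⟩, (hI _).2 ⟨_, _, e⟩, rfl⟩
  · rw [← addOrderOf_eq_card_of_forall_mem_zmultiples hgen]
    have key : ∀ k : ℤ, ((addOrderOf (1 : O ⧸ I) : ℕ) : ℤ) ∣ k ↔ (n : ℤ) ∣ k := by
      intro k
      rw [addOrderOf_dvd_iff_zsmul_eq_zero, zsmul_eq_mul, mul_one, ← hint,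
        ← Ideal.Quotient.eq_zero_iff_mem, map_intCast]
    apply Nat.dvd_antisymm
    · exact_mod_cast (key n).2 dvd_rfl
    · exact_mod_cast (key _).1 dvd_rfl

/-- Let `𝒪 = ℤ[τ]` be the order of discriminant `Δ` in an imaginary quadratic
field, `ℓ` an odd prime and `a ≥ 1`.  There exists a primitive, proper, real ideal of `𝒪` of
index `ℓ^a` iff `a = ord_ℓ(Δ)`. -/
theorem exists_primitive_proper_real_odd_prime_power
    (K : Type*) [Field K] [Algebra ℚ K]
    (hdim : Module.finrank ℚ K = 2) (himag : IsEmpty (K →+* ℝ))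
    (σ : K →+* K) (hσ : σ ≠ RingHom.id K)
    (Δ : ℤ) (hΔneg : Δ < 0) (hΔmod : Δ % 4 = 0 ∨ Δ % 4 = 1)
    (τ : K) (hτ : τ ^ 2 - (Δ : K) * τ + (((Δ ^ 2 - Δ) / 4 : ℤ) : K) = 0)
    (ℓ : ℕ) (hℓ : ℓ.Prime) (hodd : ℓ ≠ 2) (a : ℕ) (ha : 0 < a) :
    (∃ I : Ideal (Subring.closure {τ} : Subring K),
        IsPrimitiveIdeal (Subring.closure {τ}) I ∧ IsProperIdeal (Subring.closure {τ}) I ∧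
        IsRealIdeal σ (Subring.closure {τ}) I ∧
        Nat.card ((Subring.closure {τ} : Subring K) ⧸ I) = ℓ ^ a) ↔
    a = padicValInt ℓ Δ := by
  have : CharZero K := algebraRat.charZero K
  obtain ⟨N, hNdef⟩ : ∃ N, N = (Δ ^ 2 - Δ) / 4 := ⟨_, rfl⟩
  have hN : 4 * N = Δ ^ 2 - Δ := by
    rw [hNdef]
    apply Int.mul_ediv_cancel'
    rw [show Δ ^ 2 - Δ = Δ * (Δ - 1) by ring]
    rcases hΔmod with h | h
    · exact (Int.dvd_of_emod_eq_zero h).mul_right _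
    · exact Dvd.dvd.mul_left (by omega) _
  rw [← hNdef] at hτ
  have hστ := aux_sigma hdim σ hσ Δ N hΔneg hN τ hτ
  have hO := aux_mem Δ N τ hτ
  have : Fact ℓ.Prime := ⟨hℓ⟩
  have hval : ∀ m : ℕ, (ℓ : ℤ) ^ m ∣ Δ ↔ m ≤ padicValInt ℓ Δ := by
    intro m
    rw [padicValInt_dvd_iff]
    simp [hΔneg.ne]
  constructor
  · rintro ⟨I, h1, h2, h3, h4⟩
    have := aux_fwd σ Δ N hΔneg hN τ hτ hστ _ hO ℓ hℓ hodd a ha I h1 h2 h3 h4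
    rw [hval, hval] at this
    omega
  · intro hav
    have d1 : (ℓ : ℤ) ^ a ∣ Δ := (hval _).2 hav.le
    have d2 : ¬ (ℓ : ℤ) ^ (a + 1) ∣ Δ := by rw [hval]; omega
    have hpr : Prime (ℓ : ℤ) := Nat.prime_iff_prime_int.1 hℓ
    have hcop : IsCoprime ((ℓ : ℤ) ^ a) 4 := by
      apply IsCoprime.pow_left
      have : Nat.Coprime ℓ (2 ^ 2) :=
        Nat.Coprime.pow_right _ ((Nat.coprime_primes hℓ Nat.prime_two).2 hodd)
      exact_mod_cast Nat.isCoprime_iff_coprime.2 this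
    have d3 : (ℓ : ℤ) ^ a ∣ N := by
      apply hcop.dvd_of_dvd_mul_left
      rw [hN, show Δ ^ 2 - Δ = Δ * (Δ - 1) by ring]
      exact d1.mul_right _
    obtain ⟨N', hN'⟩ := d3
    refine aux_bwd σ Δ N hΔneg hN τ hτ hστ _ hO (ℓ ^ a) (pow_ne_zero _ hℓ.ne_zero) N'
      (by exact_mod_cast d1) (by push_cast; exact hN') ?_
    push_cast
    apply IsCoprime.pow_left
    rw [hpr.irreducible.coprime_iff_not_dvd]
    rintro ⟨c, hc⟩
    apply d2
    have : (ℓ : ℤ) ^ (a + 1) ∣ Δ * (Δ - 1) := ⟨4 * c, by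
      rw [hc] at hN'; rw [hN'] at hN; rw [pow_succ]; linear_combination -hN⟩
    refine IsCoprime.dvd_of_dvd_mul_right ?_ this
    apply IsCoprime.pow_left
    obtain ⟨e, he⟩ := (dvd_pow_self (ℓ : ℤ) ha.ne').trans d1
    exact ⟨e, -1, by linear_combination -he⟩
end

section
/- Let K be an imaginary quadratic field, let 𝒪 = ℤ + 𝔣𝒪_K and 𝒪′ = ℤ + 𝔣′𝒪_K be orders of conductors 𝔣 and 𝔣′ with 𝔣′ ∣ 𝔣, and let 𝔞 be a proper fractional 𝒪-ideal. Then the quotient group (𝔞𝒪′)/𝔞 is cyclic of order 𝔣/𝔣′. -/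
variable {K : Type*} [Field K]

/-- The order `ℤ + f·𝒪_K` of conductor `f` in `K` (as the subring generated by `f·𝒪_K`). -/
noncomputable def condOrder (K : Type*) [Field K] (f : ℕ) : Subring K :=
  Subring.closure ((fun y : K => (f : K) * y) '' (integralClosure ℤ K : Set K))

/-- `M` is a fractional `O`-ideal. -/
def IsFracIdeal (O : Subring K) (M : Submodule ℤ K) : Prop :=
  M ≠ ⊥ ∧ (∀ o ∈ O, ∀ m ∈ M, o * m ∈ M) ∧
    ∃ d ∈ O, d ≠ 0 ∧ ∀ m ∈ M, d * m ∈ O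

/-- A fractional `O`-ideal `M` is *proper* if `{x ∈ K : xM ⊆ M} = O`. -/
def IsProperFracIdeal (O : Subring K) (M : Submodule ℤ K) : Prop :=
  ∀ x : K, (∀ m ∈ M, x * m ∈ M) ↔ x ∈ O

/-- The fractional `O'`-ideal `M·O'`. -/
def extIdeal (O' : Subring K) (M : Submodule ℤ K) : Submodule ℤ K :=
  Submodule.span ℤ {z : K | ∃ a ∈ M, ∃ b ∈ O', z = a * b}

theorem mem_condOrder_iff (f : ℕ) (x : K) :
    x ∈ condOrder K f ↔ ∃ k : ℤ, ∃ y ∈ integralClosure ℤ K, x = k + f * y := by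
  constructor
  · intro hx
    unfold condOrder at hx
    induction hx using Subring.closure_induction with
    | mem x hx =>
      obtain ⟨y, hy, rfl⟩ := hx
      exact ⟨0, y, hy, by simp⟩
    | zero => exact ⟨0, 0, zero_mem _, by simp⟩
    | one => exact ⟨1, 0, zero_mem _, by simp⟩
    | add x y _ _ hx hy =>
      obtain ⟨k, a, ha, rfl⟩ := hx
      obtain ⟨l, b, hb, rfl⟩ := hy
      exact ⟨k + l, a + b, add_mem ha hb, by push_cast; ring⟩
    | neg x _ hx =>
      obtain ⟨k, a, ha, rfl⟩ := hx
      exact ⟨-k, -a, neg_mem ha, by push_cast; ring⟩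
    | mul x y _ _ hx hy =>
      obtain ⟨k, a, ha, rfl⟩ := hx
      obtain ⟨l, b, hb, rfl⟩ := hy
      refine ⟨k * l, k * b + l * a + f * (a * b), ?_, by push_cast; ring⟩
      exact add_mem (add_mem (mul_mem (intCast_mem _ _) hb) (mul_mem (intCast_mem _ _) ha))
        (mul_mem (natCast_mem _ _) (mul_mem ha hb))
  · rintro ⟨k, y, hy, rfl⟩
    exact add_mem (intCast_mem _ _) (Subring.subset_closure ⟨y, hy, rfl⟩)

open NumberField in
theorem dvd_of_mul_mem [NumberField K] (hdim : Module.finrank ℚ K = 2) (f m : ℕ)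
    (h : ∀ y ∈ integralClosure ℤ K, (m : K) * y ∈ condOrder K f) : f ∣ m := by
  rcases Nat.eq_zero_or_pos (Nat.gcd m f) with h0 | hpos
  · rw [Nat.gcd_eq_zero_iff] at h0
    simp [h0.1]
  obtain ⟨f1, hf1⟩ := Nat.gcd_dvd_right m f
  set g := Nat.gcd m f with hg
  have hgK : (g : K) ≠ 0 := by exact_mod_cast hpos.ne'
  -- every integer is in ℤ + f1 O_K
  have key : ∀ y : 𝓞 K, ∃ k : ℤ, ∃ z : 𝓞 K, y = k + f1 * z := by
    intro y
    obtain ⟨k, z, hz, e⟩ := (mem_condOrder_iff f _).1 (h y y.2)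
    have bez := Nat.gcd_eq_gcd_ab m f
    rw [← hg] at bez
    set A := Nat.gcdA m f
    set B := Nat.gcdB m f
    have bezK : (g : K) = m * A + f * B := by exact_mod_cast congrArg (Int.cast : ℤ → K) bez
    obtain ⟨z, rfl⟩ : ∃ z₀ : 𝓞 K, (z₀ : K) = z := ⟨⟨z, hz⟩, rfl⟩
    let z' : 𝓞 K := A * z + B * y
    have e2 : (g : K) * y = (A * k : ℤ) + (f : K) * (z' : K) := by
      simp only [z']
      push_cast
      rw [bezK]
      simp only [map_intCast]
      linear_combination (A : K) * e
    have e3 : (g : K) * ((y - f1 * z' : 𝓞 K) : K) = (A * k : ℤ) := by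
      have : (f : K) = g * f1 := by exact_mod_cast congrArg (Nat.cast : ℕ → K) hf1
      push_cast at e2 ⊢
      rw [this] at e2
      linear_combination e2
    have hint : IsIntegral ℤ (((A * k : ℤ) : ℚ) / g) := by
      have : IsIntegral ℤ (algebraMap ℚ K (((A * k : ℤ) : ℚ) / g)) := by
        have h1 : algebraMap ℚ K (((A * k : ℤ) : ℚ) / g) = ((y - f1 * z' : 𝓞 K) : K) := by
          rw [map_div₀, map_intCast, map_natCast, ← e3]
          field_simp
        rw [h1]
        exact RingOfIntegers.isIntegral_coe _
      exact (isIntegral_algebraMap_iff (algebraMap ℚ K).injective).1 this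
    obtain ⟨t, ht⟩ := IsIntegrallyClosed.isIntegral_iff.1 hint
    refine ⟨t, z', ?_⟩
    have h2 : ((y - f1 * z' : 𝓞 K) : K) = (t : K) := by
      have : (A * k : ℤ) = g * t := by
        have hgQ : (g : ℚ) ≠ 0 := by exact_mod_cast hpos.ne'
        rw [eq_div_iff hgQ] at ht
        simp only [algebraMap_int_eq, eq_intCast] at ht
        have : t * (g : ℤ) = A * k := by exact_mod_cast ht
        rw [← this]; ring
      rw [this] at e3
      push_cast at e3
      apply mul_left_cancel₀ hgK
      push_cast
      exact e3
    have h3 : (y - f1 * z' : 𝓞 K) = (t : 𝓞 K) := by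
      apply RingOfIntegers.ext
      rw [h2]; simp
    rw [← h3]; ring
  have hr : Module.finrank ℤ (𝓞 K) = 2 := by rw [RingOfIntegers.rank, hdim]
  let b : Module.Basis (Fin 2) ℤ (𝓞 K) := Module.finBasisOfFinrankEq ℤ (𝓞 K) hr
  have co : ∀ (y : 𝓞 K) (i : Fin 2) (k : ℤ) (z : 𝓞 K), y = k + f1 * z →
      b.repr y i = k * b.repr 1 i + f1 * b.repr z i := by
    intro y i k z e
    have : y = k • (1 : 𝓞 K) + (f1 : ℤ) • z := by rw [e]; simp
    rw [this, map_add, map_smul, map_smul]; rfl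
  obtain ⟨k, z, e⟩ := key (b 0)
  obtain ⟨l, w, e'⟩ := key (b 1)
  have c00 := co _ 0 _ _ e
  have c01 := co _ 1 _ _ e
  have c10 := co _ 0 _ _ e'
  have c11 := co _ 1 _ _ e'
  simp only [Module.Basis.repr_self, Finsupp.single_eq_same] at c00 c11
  simp at c01 c10
  have : (f1 : ℤ) ∣ 1 := by
    set u := b.repr 1 0
    set v := b.repr 1 1
    set z0 := b.repr z 0
    set z1 := b.repr z 1
    set w0 := b.repr w 0
    set w1 := b.repr w 1
    refine ⟨w1 + z0 * (l * v) - z1 * (l * u), ?_⟩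
    linear_combination c11 + (l * v) * c00 - (l * u) * c01
  have hf1' : f1 = 1 := by
    have := Int.eq_one_of_dvd_one (by positivity) this
    exact_mod_cast this
  rw [hf1, hf1', mul_one]
  exact Nat.gcd_dvd_left m f

theorem snf_mem {V : Type*} [AddCommGroup V] (b : Module.Basis (Fin 2) ℤ V) (N : Submodule ℤ V) :
    ∃ (e : Module.Basis (Fin 2) ℤ V) (c : Fin 2 → ℤ), ∀ x, x ∈ N ↔ ∀ i, c i ∣ e.repr x i := by
  obtain ⟨n, s⟩ := N.smithNormalForm b
  refine ⟨s.bM, Function.extend s.f s.a 0, fun x => ⟨fun hx i => ?_, fun hx => ?_⟩⟩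
  · by_cases hi : i ∈ Set.range s.f
    · obtain ⟨j, rfl⟩ := hi
      rw [s.f.injective.extend_apply]
      have := s.repr_apply_embedding_eq_repr_smul ⟨x, hx⟩ (i := j)
      simp only [] at this
      rw [this, map_smul]
      exact ⟨_, rfl⟩
    · have := s.repr_eq_zero_of_notMem_range ⟨x, hx⟩ hi
      simp only [] at this
      rw [this]
      exact dvd_zero _
  · rw [← s.bM.sum_repr x]
    refine Submodule.sum_mem _ fun i _ => ?_
    have h := hx i
    by_cases hi : i ∈ Set.range s.f
    · obtain ⟨j, rfl⟩ := hi
      rw [s.f.injective.extend_apply] at h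
      obtain ⟨t, ht⟩ := h
      rw [ht, mul_comm, mul_smul, ← s.snf]
      exact N.smul_mem _ (s.bN j).2
    · rw [Function.extend_apply' _ _ _ (by simpa using hi)] at h
      have : s.bM.repr x i = 0 := by simpa using h
      rw [this, zero_smul]
      exact N.zero_mem

theorem cyclic_quot {V : Type*} [AddCommGroup V] (b : Module.Basis (Fin 2) ℤ V)
    (N : Submodule ℤ V)
    (h : ∀ d : ℤ, (∀ x ∈ N, ∃ y, x = d • y) → ∀ x, ∃ y : V, x = d • y) :
    IsAddCyclic (V ⧸ N) := by
  obtain ⟨e, c, hc⟩ := snf_mem b N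
  have hcop : IsCoprime (c 0) (c 1) := by
    rw [Int.isCoprime_iff_gcd_eq_one]
    have hd : ∀ i, ((Int.gcd (c 0) (c 1) : ℕ) : ℤ) ∣ c i := by
      intro i
      fin_cases i
      · exact Int.gcd_dvd_left ..
      · exact Int.gcd_dvd_right ..
    obtain ⟨y, hy⟩ := h (Int.gcd (c 0) (c 1) : ℕ) (fun x hx => by
      have h1 := fun i => (hd i).trans ((hc x).1 hx i)
      choose t ht using h1
      refine ⟨∑ i, t i • e i, ?_⟩
      rw [Finset.smul_sum]
      conv_lhs => rw [← e.sum_repr x]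
      refine Finset.sum_congr rfl fun i _ => ?_
      rw [ht i, mul_smul]) (e 0)
    have h2 := congrArg (fun x => e.repr x 0) hy
    simp at h2
    have := Int.eq_one_of_dvd_one (by positivity) ⟨_, h2⟩
    exact_mod_cast this
  obtain ⟨u, v, huv⟩ := hcop
  refine ⟨⟨Submodule.Quotient.mk (e 0 + e 1), fun q => ?_⟩⟩
  obtain ⟨x, rfl⟩ := Submodule.Quotient.mk_surjective N q
  refine AddSubgroup.mem_zmultiples_iff.2
    ⟨e.repr x 0 * (v * c 1) + e.repr x 1 * (u * c 0), ?_⟩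
  rw [← Submodule.Quotient.mk_smul, Submodule.Quotient.eq, hc]
  intro i
  fin_cases i
  · refine ⟨u * (e.repr x 1 - e.repr x 0), ?_⟩
    simp
    linear_combination (e.repr x 0) * huv
  · refine ⟨v * (e.repr x 0 - e.repr x 1), ?_⟩
    simp
    linear_combination (e.repr x 1) * huv

theorem le_extIdeal (O : Subring K) (M : Submodule ℤ K) : M ≤ extIdeal O M := fun x hx =>
  Submodule.subset_span ⟨x, hx, 1, one_mem _, by simp⟩

theorem mul_mem_extIdeal (O : Subring K) (M : Submodule ℤ K) {x b : K} (hb : b ∈ O)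
    (hx : x ∈ extIdeal O M) : x * b ∈ extIdeal O M := by
  unfold extIdeal at hx
  induction hx using Submodule.span_induction with
  | mem x hx =>
    obtain ⟨a, ha, c, hc, rfl⟩ := hx
    exact Submodule.subset_span ⟨a, ha, c * b, mul_mem hc hb, by ring⟩
  | zero => simp
  | add x y _ _ hx hy => rw [add_mul]; exact add_mem hx hy
  | smul a x _ hx => rw [smul_mul_assoc]; exact Submodule.smul_mem _ _ hx

theorem condOrder_integral (f : ℕ) {x : K} (hx : x ∈ condOrder K f) :
    x ∈ integralClosure ℤ K := by
  obtain ⟨k, y, hy, rfl⟩ := (mem_condOrder_iff f x).1 hx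
  exact add_mem (intCast_mem _ _) (mul_mem (natCast_mem _ _) hy)

open NumberField in
theorem ext_basis [NumberField K] (hdim : Module.finrank ℚ K = 2) (f f' : ℕ) (hf' : 0 < f')
    (M : Submodule ℤ K) (hfrac : IsFracIdeal (condOrder K f) M) :
    Nonempty (Module.Basis (Fin 2) ℤ (extIdeal (condOrder K f') M)) := by
  obtain ⟨hne, -, d, hdO, hd0, hd⟩ := hfrac
  obtain ⟨α, hα, hα0⟩ := M.ne_bot_iff.1 hne
  have hr : Module.finrank ℤ (𝓞 K) = 2 := by rw [RingOfIntegers.rank, hdim]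
  have h1 : ∀ z ∈ extIdeal (condOrder K f') M, d * z ∈ integralClosure ℤ K := by
    intro z hz
    unfold extIdeal at hz
    induction hz using Submodule.span_induction with
    | mem x hx =>
      obtain ⟨a, ha, c, hc, rfl⟩ := hx
      rw [← mul_assoc]
      exact mul_mem (condOrder_integral f (hd a ha)) (condOrder_integral f' hc)
    | zero => simp
    | add x y _ _ hx hy => rw [mul_add]; exact add_mem hx hy
    | smul a x _ hx => rw [mul_smul_comm]; exact zsmul_mem hx _
  let φ : extIdeal (condOrder K f') M →ₗ[ℤ] 𝓞 K :=
    AddMonoidHom.toIntLinearMap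
    { toFun := fun z => ⟨d * z, h1 z z.2⟩
      map_zero' := RingOfIntegers.ext (mul_zero d)
      map_add' := fun x y => RingOfIntegers.ext (mul_add d (x : K) (y : K)) }
  have hφ : Function.Injective φ := by
    intro x y hxy
    have : d * (x : K) = d * y := congrArg (fun t : 𝓞 K => (t : K)) hxy
    exact Subtype.ext (mul_left_cancel₀ hd0 this)
  have h2 : ∀ y : 𝓞 K, α * (f' * (y : K)) ∈ extIdeal (condOrder K f') M := fun y =>
    Submodule.subset_span ⟨α, hα, f' * (y : K), Subring.subset_closure ⟨y, y.2, rfl⟩, rfl⟩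
  let ψ : 𝓞 K →ₗ[ℤ] extIdeal (condOrder K f') M :=
    AddMonoidHom.toIntLinearMap
    { toFun := fun y => ⟨α * (f' * (y : K)), h2 y⟩
      map_zero' := by ext; simp
      map_add' := fun x y => by ext; simp [mul_add] }
  have hψ : Function.Injective ψ := by
    intro x y hxy
    have : α * (f' * (x : K)) = α * (f' * (y : K)) := congrArg Subtype.val hxy
    have hf0 : (f' : K) ≠ 0 := by exact_mod_cast hf'.ne'
    exact RingOfIntegers.ext (mul_left_cancel₀ hf0 (mul_left_cancel₀ hα0 this))
  have : Module.Finite ℤ (extIdeal (condOrder K f') M) := Module.Finite.of_injective φ hφ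
  have e : Module.finrank ℤ (extIdeal (condOrder K f') M) = 2 := by
    have a1 := LinearMap.finrank_le_finrank_of_injective hφ
    have a2 := LinearMap.finrank_le_finrank_of_injective hψ
    omega
  exact ⟨Module.finBasisOfFinrankEq ℤ _ e⟩

theorem main_aux [NumberField K] (hdim : Module.finrank ℚ K = 2)
    (f f' : ℕ) (hf' : 0 < f') (hdvd : f' ∣ f)
    (M : Submodule ℤ K)
    (hfrac : IsFracIdeal (condOrder K f) M)
    (hprop : IsProperFracIdeal (condOrder K f) M) :
    IsAddCyclic ((extIdeal (condOrder K f') M) ⧸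
        (M.comap (extIdeal (condOrder K f') M).subtype)) ∧
    Nat.card ((extIdeal (condOrder K f') M) ⧸
        (M.comap (extIdeal (condOrder K f') M).subtype)) = f / f' := by
  obtain ⟨b⟩ := ext_basis hdim f f' hf' M hfrac
  have hcyc : IsAddCyclic ((extIdeal (condOrder K f') M) ⧸
        (M.comap (extIdeal (condOrder K f') M).subtype)) := by
    apply cyclic_quot b
    intro n hn
    rintro ⟨x, hx⟩
    suffices ∃ y ∈ extIdeal (condOrder K f') M, x = n • y by
      obtain ⟨y, hy, e⟩ := this
      exact ⟨⟨y, hy⟩, Subtype.ext e⟩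
    unfold extIdeal at hx
    induction hx using Submodule.span_induction with
    | mem x hx =>
      obtain ⟨a, ha, c, hc, rfl⟩ := hx
      obtain ⟨y, hy⟩ := hn ⟨a, le_extIdeal _ _ ha⟩ ha
      have hy' : a = n • (y : K) := congrArg Subtype.val hy
      exact ⟨y * c, mul_mem_extIdeal _ _ hc y.2, by rw [hy', smul_mul_assoc]⟩
    | zero => exact ⟨0, zero_mem _, by simp⟩
    | add x y _ _ hx hy =>
      obtain ⟨u, hu, rfl⟩ := hx
      obtain ⟨v, hv, rfl⟩ := hy
      exact ⟨u + v, add_mem hu hv, by rw [smul_add]⟩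
    | smul a x _ hx =>
      obtain ⟨u, hu, rfl⟩ := hx
      exact ⟨a • u, Submodule.smul_mem _ _ hu, smul_comm _ _ _⟩
  refine ⟨hcyc, ?_⟩
  rw [← IsAddCyclic.exponent_eq_card]
  obtain ⟨g, rfl⟩ := hdvd
  rw [Nat.mul_div_cancel_left _ hf']
  apply Nat.dvd_antisymm
  · rw [AddMonoid.exponent_dvd_iff_forall_nsmul_eq_zero]
    intro q
    obtain ⟨⟨x, hx⟩, rfl⟩ := Submodule.Quotient.mk_surjective _ q
    rw [← Submodule.Quotient.mk_smul, Submodule.Quotient.mk_eq_zero]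
    change g • x ∈ M
    unfold extIdeal at hx
    induction hx using Submodule.span_induction with
    | mem x hx =>
      obtain ⟨a, ha, c, hc, rfl⟩ := hx
      have : (g : K) * c ∈ condOrder K (f' * g) := by
        obtain ⟨k, y, hy, rfl⟩ := (mem_condOrder_iff _ _).1 hc
        exact (mem_condOrder_iff _ _).2 ⟨g * k, y, hy, by push_cast; ring⟩
      have h := hfrac.2.1 _ this a ha
      rw [nsmul_eq_mul]
      convert h using 1
      ring
    | zero => simp
    | add x y _ _ hx hy => rw [smul_add]; exact add_mem hx hy
    | smul a x _ hx => rw [smul_comm]; exact Submodule.smul_mem _ _ hx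
  · set n := AddMonoid.exponent ((extIdeal (condOrder K f') M) ⧸
        (M.comap (extIdeal (condOrder K f') M).subtype)) with hn
    have h1 := AddMonoid.exponent_dvd_iff_forall_nsmul_eq_zero.1 (dvd_of_eq hn.symm)
    have h2 : f' * g ∣ f' * n := by
      apply dvd_of_mul_mem hdim
      intro y hy
      rw [← hprop]
      intro m hm
      have h3 : m * (f' * y) ∈ extIdeal (condOrder K f') M :=
        Submodule.subset_span ⟨m, hm, _, Subring.subset_closure ⟨y, hy, rfl⟩, rfl⟩
      have h4 := h1 (Submodule.Quotient.mk ⟨_, h3⟩)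
      rw [← Submodule.Quotient.mk_smul, Submodule.Quotient.mk_eq_zero] at h4
      have h5 : n • (m * (f' * y)) ∈ M := h4
      rw [nsmul_eq_mul] at h5
      convert h5 using 1
      push_cast
      ring
    exact Nat.dvd_of_mul_dvd_mul_left hf' h2

/-- Let `K` be an imaginary quadratic field, `𝒪 = ℤ + f𝒪_K` and
`𝒪′ = ℤ + f′𝒪_K` orders of conductors `f` and `f′` with `f′ ∣ f`, and `𝔞` a proper
fractional `𝒪`-ideal.  Then the quotient group `(𝔞𝒪′)/𝔞` is cyclic of order `f/f′`. -/
theorem quotient_extIdeal_cyclic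
    (K : Type*) [Field K] [Algebra ℚ K]
    (hdim : Module.finrank ℚ K = 2) (himag : IsEmpty (K →+* ℝ))
    (f f' : ℕ) (hf' : 0 < f') (hdvd : f' ∣ f)
    (M : Submodule ℤ K)
    (hfrac : IsFracIdeal (condOrder K f) M)
    (hprop : IsProperFracIdeal (condOrder K f) M) :
    IsAddCyclic ((extIdeal (condOrder K f') M) ⧸
        (M.comap (extIdeal (condOrder K f') M).subtype)) ∧
    Nat.card ((extIdeal (condOrder K f') M) ⧸
        (M.comap (extIdeal (condOrder K f') M).subtype)) = f / f' := by
  have : CharZero K := algebraRat.charZero K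
  have hd : @Module.finrank ℚ K _ _ (DivisionRing.toRatAlgebra (R := K)).toModule = 2 := by
    rw [← hdim]
    congr 2
    exact Subsingleton.elim _ _
  have hnf : NumberField K :=
    { to_charZero := inferInstance
      to_finiteDimensional := @Module.finite_of_finrank_pos ℚ K _ _ (DivisionRing.toRatAlgebra (R := K)).toModule _ _ (by rw [hd]; norm_num) }
  exact main_aux hd f f' hf' hdvd M hfrac hprop
end

section
/- Let K be an imaginary quadratic field, ℓ a prime ramified in K, 𝔭 the prime above ℓ, and b a positive integer. Inside the group 𝔭^{-(2b-1)}/𝒪_K ≅ ℤ/ℓ^bℤ × ℤ/ℓ^{b−1}ℤ, the element x = 1/ℓ^{b−1} + 𝒪_K generates a pure subgroup; that is, for all positive integers m and i, if there exists y ∈ 𝔭^{-(2b-1)}/𝒪_K with m·x = ℓ^i·y, then there exists n ∈ ℤ with m·x = ℓ^i·n·x. Consequently ⟨x⟩ is a direct summand of 𝔭^{-(2b-1)}/𝒪_K. -/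
variable {K : Type*} [Field K]

/-- The ring of integers `𝒪_K` of `K`, as a subring. -/
noncomputable def ringOfInt (K : Type*) [Field K] : Subring K :=
  (integralClosure ℤ K).toSubring

/-- The additive subgroup `𝔭^{-d} = {x ∈ K : x·𝔭^d ⊆ 𝒪_K}` of `K`. -/
def invPow (𝔭 : Ideal (ringOfInt K)) (d : ℕ) : AddSubgroup K where
  carrier := {x : K | ∀ y : ringOfInt K, y ∈ 𝔭 ^ d → x * (y : K) ∈ ringOfInt K}
  zero_mem' := fun y _ => by simpa using (ringOfInt K).zero_mem
  add_mem' := fun {a b} ha hb y hy => by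
    simpa [add_mul] using (ringOfInt K).add_mem (ha y hy) (hb y hy)
  neg_mem' := fun {a} ha y hy => by
    simpa [neg_mul] using (ringOfInt K).neg_mem (ha y hy)

theorem aux_abs (R : Type*) [CommRing R] [IsDomain R] [CharZero R] [Module.Finite ℤ R]
    (hrank : Module.finrank ℤ R = 2)
    (hpure : ∀ (n u : ℤ) (x : R), n ≠ 0 → (u : R) = n * x → ∃ k : ℤ, (k : R) = x) :
    ∃ w : R, (∀ x : R, ∃ u v : ℤ, x = u + v * w) ∧
      ∀ u v : ℤ, (u : R) + v * w = 0 → u = 0 ∧ v = 0 := by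
  let S : Submodule ℤ R := Submodule.span ℤ {(1 : R)}
  have memS : ∀ x : R, x ∈ S ↔ ∃ u : ℤ, (u : R) = x := by
    intro x
    simp [S, Submodule.mem_span_singleton]
  clear_value S
  have tf : Module.IsTorsionFree ℤ (R ⧸ S) := by
    refine Module.isTorsionFree_iff_smul_eq_zero (R := ℤ) (M := R ⧸ S) |>.2 ?_
    intro n y h
    by_cases hn : n = 0
    · exact Or.inl hn
    right
    obtain ⟨x, rfl⟩ := Submodule.Quotient.mk_surjective S y
    rw [← Submodule.Quotient.mk_smul, Submodule.Quotient.mk_eq_zero, memS] at h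
    obtain ⟨u, hu⟩ := h
    rw [Submodule.Quotient.mk_eq_zero, memS]
    exact hpure n u x hn (by simpa using hu)
  have : Module.Free ℤ (R ⧸ S) := inferInstance
  have hS : Module.finrank ℤ S = 1 := by
    have : S = Submodule.span ℤ {(1 : R)} := by
      ext x; rw [memS]; simp [Submodule.mem_span_singleton]
    rw [this]
    rw [← (LinearEquiv.toSpanNonzeroSingleton ℤ R 1 one_ne_zero).finrank_eq]
    exact Module.finrank_self ℤ
  have hQ : Module.finrank ℤ (R ⧸ S) = 1 := by
    have := Submodule.finrank_quotient_add_finrank S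
    omega
  obtain ⟨B⟩ : Nonempty (Module.Basis Unit ℤ (R ⧸ S)) := ⟨Module.basisUnique Unit hQ⟩
  obtain ⟨w, hw⟩ := Submodule.Quotient.mk_surjective S (B ())
  refine ⟨w, ?_, ?_⟩
  · intro x
    obtain ⟨v, h⟩ : ∃ v : ℤ, v • B () = Submodule.Quotient.mk x := by
      have h := B.sum_repr (Submodule.Quotient.mk x)
      simp only [Finset.univ_unique, Finset.sum_singleton] at h
      exact ⟨_, h⟩
    rw [← hw, ← Submodule.Quotient.mk_smul, eq_comm, Submodule.Quotient.eq, memS] at h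
    obtain ⟨u, hu⟩ := h
    rw [zsmul_eq_mul] at hu
    exact ⟨u, v, by linear_combination -hu⟩
  · intro u v h
    have hv : v = 0 := by
      have h2 : v • B () = 0 := by
        rw [← hw, ← Submodule.Quotient.mk_smul, Submodule.Quotient.mk_eq_zero, memS]
        exact ⟨-u, by rw [zsmul_eq_mul]; push_cast; linear_combination -h⟩
      exact (smul_eq_zero.1 h2).resolve_right (B.ne_zero ())
    subst hv
    simpa using h

theorem aux_int_basis (K : Type*) [Field K] [Algebra ℚ K]
    (hdim : Module.finrank ℚ K = 2) :
    ∃ ω ∈ ringOfInt K, (∀ x ∈ ringOfInt K, ∃ u v : ℤ, x = u + v * ω) ∧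
      ∀ u v : ℤ, (u : K) + v * ω = 0 → u = 0 ∧ v = 0 := by
  have : CharZero K := algebraRat.charZero K
  have e : ‹Algebra ℚ K› = DivisionRing.toRatAlgebra := Subsingleton.elim _ _
  subst e
  have : FiniteDimensional ℚ K := Module.finite_of_finrank_pos (by omega)
  have : NumberField K := ⟨⟩
  obtain ⟨w, h1, h2⟩ := aux_abs (NumberField.RingOfIntegers K)
    ((NumberField.RingOfIntegers.rank K).trans hdim) (by
      intro n u x hn hu
      have hu' : (u : K) = n * algebraMap (NumberField.RingOfIntegers K) K x := by
        have := congrArg (algebraMap (NumberField.RingOfIntegers K) K) hu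
        simpa using this
      have hx : algebraMap (NumberField.RingOfIntegers K) K x = algebraMap ℚ K ((u : ℚ) / n) := by
        have : (n : K) ≠ 0 := by exact_mod_cast hn
        simp only [map_div₀, map_intCast]
        field_simp
        linear_combination -hu'
      have hint : IsIntegral ℤ ((u : ℚ) / n) := by
        have := x.isIntegral_coe
        rw [hx] at this
        exact (isIntegral_algebraMap_iff (algebraMap ℚ K).injective).1 this
      obtain ⟨k, hk⟩ := IsIntegrallyClosed.isIntegral_iff.1 hint
      refine ⟨k, ?_⟩
      apply NumberField.RingOfIntegers.coe_injective
      rw [hx, ← hk]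
      simp)
  refine ⟨algebraMap (NumberField.RingOfIntegers K) K w, w.isIntegral_coe, ?_, ?_⟩
  · intro x hx
    obtain ⟨u, v, h⟩ := h1 ⟨x, hx⟩
    refine ⟨u, v, ?_⟩
    have := congrArg (algebraMap (NumberField.RingOfIntegers K) K) h
    simp only [map_add, map_mul, map_intCast] at this
    exact this
  · intro u v h
    apply h2
    apply NumberField.RingOfIntegers.coe_injective
    simpa using h

theorem aux_int_mem (K : Type*) [Field K] (ℓ : ℕ) (hℓ : ℓ.Prime)
    (𝔭 : Ideal (ringOfInt K)) (h𝔭 : 𝔭.IsPrime)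
    (hl : (ℓ : ringOfInt K) ∈ 𝔭) (u : ℤ) (hu : (u : ringOfInt K) ∈ 𝔭) : (ℓ : ℤ) ∣ u := by
  by_contra h
  have hc : IsCoprime (ℓ : ℤ) u :=
    ((Nat.prime_iff_prime_int.1 hℓ).irreducible.coprime_iff_not_dvd).2 h
  obtain ⟨s, t, hst⟩ := hc
  apply h𝔭.ne_top
  rw [Ideal.eq_top_iff_one]
  have : (1 : ringOfInt K) = (s : ringOfInt K) * (ℓ : ringOfInt K) + t * u := by
    exact_mod_cast congrArg (Int.cast (R := ringOfInt K)) hst.symm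
  rw [this]
  exact 𝔭.add_mem (𝔭.mul_mem_left _ hl) (𝔭.mul_mem_left _ hu)

theorem aux_alpha (K : Type*) [Field K] [Algebra ℚ K]
    (hdim : Module.finrank ℚ K = 2)
    (ℓ : ℕ) (hℓ : ℓ.Prime)
    (𝔭 : Ideal (ringOfInt K)) (h𝔭 : 𝔭.IsPrime)
    (hram : 𝔭 ^ 2 = Ideal.span {((ℓ : ℕ) : ringOfInt K)}) :
    ∃ α ∈ 𝔭, (∀ x : ringOfInt K, ∃ u v : ℤ, x = u + v * α) ∧
      (∀ x ∈ 𝔭, ∃ u v : ℤ, x = u * ℓ + v * α) ∧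
      ∀ u v : ℤ, (u : ringOfInt K) + v * α = 0 → u = 0 ∧ v = 0 := by
  haveI : CharZero K := algebraRat.charZero K
  have hl : (ℓ : ringOfInt K) ∈ 𝔭 :=
    Ideal.pow_le_self (two_ne_zero) (hram ▸ Ideal.mem_span_singleton_self _)
  have hint := aux_int_mem K ℓ hℓ 𝔭 h𝔭 hl
  obtain ⟨ω', hω, hspan', hind'⟩ := aux_int_basis K hdim
  obtain ⟨ω, rfl⟩ : ∃ w : ringOfInt K, (w : K) = ω' := ⟨⟨ω', hω⟩, rfl⟩
  have hspan : ∀ x : ringOfInt K, ∃ u v : ℤ, x = u + v * ω := by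
    intro x
    obtain ⟨u, v, h⟩ := hspan' x x.2
    exact ⟨u, v, Subtype.ext (by simpa using h)⟩
  have hind : ∀ u v : ℤ, (u : ringOfInt K) + v * ω = 0 → u = 0 ∧ v = 0 := by
    intro u v h
    exact hind' u v (by simpa using congrArg (Subtype.val) h)
  have hl0 : (ℓ : ringOfInt K) ≠ 0 := by
    intro h
    have := (hind ℓ 0 (by simpa using h)).1
    exact hℓ.ne_zero (by exact_mod_cast this)
  have key : ∃ c : ℤ, (c : ringOfInt K) + ω ∈ 𝔭 := by
    by_cases hex : ∃ u v : ℤ, (u : ringOfInt K) + v * ω ∈ 𝔭 ∧ ¬ (ℓ : ℤ) ∣ v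
    · obtain ⟨u, v, hm, hv⟩ := hex
      obtain ⟨s, t, hst⟩ : IsCoprime (ℓ : ℤ) v :=
        ((Nat.prime_iff_prime_int.1 hℓ).irreducible.coprime_iff_not_dvd).2 hv
      have h1 : (s : ringOfInt K) * (ℓ : ringOfInt K) + t * v = 1 := by
        exact_mod_cast congrArg (Int.cast (R := ringOfInt K)) hst
      refine ⟨t * u, ?_⟩
      have : ((t * u : ℤ) : ringOfInt K) + ω = t * (u + v * ω) + (s * ω) * ℓ := by
        push_cast
        linear_combination (-ω) * h1
      rw [this]
      exact 𝔭.add_mem (𝔭.mul_mem_left _ hm) (𝔭.mul_mem_left _ hl)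
    · exfalso
      push Not at hex
      have hle : 𝔭 ≤ Ideal.span {(ℓ : ringOfInt K)} := by
        intro x hx
        obtain ⟨u, v, rfl⟩ := hspan x
        obtain ⟨k, rfl⟩ := hex u v hx
        have hu : (u : ringOfInt K) ∈ 𝔭 := by
          have := 𝔭.sub_mem hx (𝔭.mul_mem_left ((k : ringOfInt K) * ω) hl)
          convert this using 1
          push_cast; ring
        obtain ⟨j, rfl⟩ := hint u hu
        rw [Ideal.mem_span_singleton]
        exact ⟨j + k * ω, by push_cast; ring⟩
      have heq : 𝔭 = Ideal.span {(ℓ : ringOfInt K)} :=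
        le_antisymm hle ((Ideal.span_singleton_le_iff_mem _).2 hl)
      have : (ℓ : ringOfInt K) ∈ Ideal.span {(ℓ : ringOfInt K) ^ 2} := by
        rw [← Ideal.span_singleton_pow, ← heq, hram]
        exact Ideal.mem_span_singleton_self _
      obtain ⟨y, hy⟩ := Ideal.mem_span_singleton.1 this
      have h1 : (1 : ringOfInt K) = y * ℓ := by
        apply mul_left_cancel₀ hl0
        linear_combination hy
      apply h𝔭.ne_top
      rw [Ideal.eq_top_iff_one, h1]
      exact 𝔭.mul_mem_left _ hl
  obtain ⟨c, hc⟩ := key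
  have hsp : ∀ x : ringOfInt K, ∃ u v : ℤ, x = u + v * (c + ω) := by
    intro x
    obtain ⟨u, v, rfl⟩ := hspan x
    exact ⟨u - v * c, v, by push_cast; ring⟩
  refine ⟨c + ω, hc, hsp, ?_, ?_⟩
  · intro x hx
    obtain ⟨u, v, rfl⟩ := hsp x
    have hu : (u : ringOfInt K) ∈ 𝔭 := by
      have := 𝔭.sub_mem hx (𝔭.mul_mem_left (v : ringOfInt K) hc)
      simpa using this
    obtain ⟨j, rfl⟩ := hint u hu
    exact ⟨j, v, by push_cast; ring⟩
  · intro u v h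
    obtain ⟨h1, h2⟩ := hind (u + v * c) v (by push_cast; linear_combination h)
    subst h2
    simpa using h1

theorem aux_invPow (K : Type*) [Field K] (ℓ : ℕ) (hl0 : (ℓ : K) ≠ 0)
    (𝔭 : Ideal (ringOfInt K))
    (hram : 𝔭 ^ 2 = Ideal.span {((ℓ : ℕ) : ringOfInt K)})
    (b : ℕ) (hb : 0 < b) (x : K) :
    x ∈ invPow 𝔭 (2 * b - 1) ↔ ∃ z ∈ 𝔭, x = (z : K) / (ℓ : K) ^ b := by
  have hp : 𝔭 ^ (2 * b - 1) * 𝔭 = Ideal.span {(ℓ : ringOfInt K) ^ b} := by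
    rw [← pow_succ, ← Ideal.span_singleton_pow, ← hram, ← pow_mul]
    congr 1; omega
  have hlb : (ℓ : K) ^ b ≠ 0 := pow_ne_zero _ hl0
  constructor
  · intro hx
    have hall : ∀ w ∈ 𝔭 ^ (2 * b - 1) * 𝔭, ∃ z ∈ 𝔭, (z : K) = x * w := by
      intro w hw
      refine Submodule.mul_induction_on hw ?_ ?_
      · intro m hm n hn
        refine ⟨⟨x * m, hx m hm⟩ * n, 𝔭.mul_mem_left _ hn, ?_⟩
        push_cast; ring
      · rintro m n ⟨z, hz, e⟩ ⟨z', hz', e'⟩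
        refine ⟨z + z', 𝔭.add_mem hz hz', ?_⟩
        push_cast; rw [e, e']; ring
    obtain ⟨z, hz, e⟩ := hall ((ℓ : ringOfInt K) ^ b) (hp ▸ Ideal.mem_span_singleton_self _)
    refine ⟨z, hz, ?_⟩
    rw [eq_div_iff hlb, e]
    push_cast; ring
  · rintro ⟨z, hz, rfl⟩ y hy
    have : y * z ∈ Ideal.span {(ℓ : ringOfInt K) ^ b} := hp ▸ Ideal.mul_mem_mul hy hz
    obtain ⟨t, ht⟩ := Ideal.mem_span_singleton.1 this
    have e : (z : K) / (ℓ : K) ^ b * y = t := by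
      have := congrArg Subtype.val ht
      push_cast at this
      field_simp
      linear_combination this
    rw [e]; exact t.2

/-- Let `K` be an imaginary quadratic field, `ℓ` a prime ramified in `K`,
`𝔭` the prime above `ℓ`, and `b ≥ 1`.  In `𝔭^{-(2b-1)}/𝒪_K`, the element
`x = 1/ℓ^{b-1} + 𝒪_K` generates a pure subgroup: for all `m, i > 0`, if `m·x = ℓ^i·y` for
some `y ∈ 𝔭^{-(2b-1)}/𝒪_K`, then `m·x = ℓ^i·n·x` for some integer `n`.  Consequently
`⟨x⟩` is a direct summand of `𝔭^{-(2b-1)}/𝒪_K`. -/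
theorem pure_subgroup_of_ramified
    (K : Type*) [Field K] [Algebra ℚ K]
    (hdim : Module.finrank ℚ K = 2) (himag : IsEmpty (K →+* ℝ))
    (ℓ : ℕ) (hℓ : ℓ.Prime)
    (𝔭 : Ideal (ringOfInt K)) (h𝔭 : 𝔭.IsPrime) (h𝔭bot : 𝔭 ≠ ⊥)
    (hram : 𝔭 ^ 2 = Ideal.span {((ℓ : ℕ) : ringOfInt K)})
    (b : ℕ) (hb : 0 < b) :
    (∀ m : ℕ, 0 < m → ∀ i : ℕ, 0 < i →
      (∃ y ∈ (invPow 𝔭 (2 * b - 1)).map (QuotientAddGroup.mk' (ringOfInt K).toAddSubgroup),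
        (m : ℤ) • ((QuotientAddGroup.mk' (ringOfInt K).toAddSubgroup) (1 / (ℓ : K) ^ (b - 1))) =
          ((ℓ : ℤ) ^ i) • y) →
      ∃ n : ℤ,
        (m : ℤ) • ((QuotientAddGroup.mk' (ringOfInt K).toAddSubgroup) (1 / (ℓ : K) ^ (b - 1))) =
          ((ℓ : ℤ) ^ i * n) •
            ((QuotientAddGroup.mk' (ringOfInt K).toAddSubgroup) (1 / (ℓ : K) ^ (b - 1)))) ∧
    (∃ C : AddSubgroup (K ⧸ (ringOfInt K).toAddSubgroup),
      C ≤ (invPow 𝔭 (2 * b - 1)).map (QuotientAddGroup.mk' (ringOfInt K).toAddSubgroup) ∧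
      (AddSubgroup.zmultiples
        ((QuotientAddGroup.mk' (ringOfInt K).toAddSubgroup) (1 / (ℓ : K) ^ (b - 1)))) ⊓ C = ⊥ ∧
      (AddSubgroup.zmultiples
        ((QuotientAddGroup.mk' (ringOfInt K).toAddSubgroup) (1 / (ℓ : K) ^ (b - 1)))) ⊔ C =
        (invPow 𝔭 (2 * b - 1)).map (QuotientAddGroup.mk' (ringOfInt K).toAddSubgroup)) := by
  haveI : CharZero K := algebraRat.charZero K
  have hl0 : (ℓ : K) ≠ 0 := by exact_mod_cast hℓ.ne_zero
  have hlz : (ℓ : ℤ) ≠ 0 := by exact_mod_cast hℓ.ne_zero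
  obtain ⟨α, hα, hsp, hspp, hind⟩ := aux_alpha K hdim ℓ hℓ 𝔭 h𝔭 hram
  have hinv := aux_invPow K ℓ hl0 𝔭 hram b hb
  obtain ⟨a, rfl⟩ : ∃ a, b = a + 1 := ⟨b - 1, by omega⟩
  simp only [Nat.add_sub_cancel]
  set π := QuotientAddGroup.mk' (ringOfInt K).toAddSubgroup with hπ
  have hπ0 : ∀ t : K, π t = 0 ↔ t ∈ ringOfInt K := by
    intro t
    exact QuotientAddGroup.eq_zero_iff t
  -- key: integrality of a combination
  have key : ∀ p q : ℤ, ((p : K) * ℓ + q * α) / (ℓ : K) ^ (a + 1) ∈ ringOfInt K →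
      (ℓ : ℤ) ^ a ∣ p := by
    intro p q h
    obtain ⟨u, v, e⟩ := hsp ⟨_, h⟩
    have e' : ((p : K) * ℓ + q * α) / (ℓ : K) ^ (a + 1) = u + v * α := by
      simpa using congrArg Subtype.val e
    rw [div_eq_iff (pow_ne_zero _ hl0)] at e'
    have h0 : ((p * ℓ - u * ℓ ^ (a + 1) : ℤ) : ringOfInt K)
        + ((q - v * ℓ ^ (a + 1) : ℤ) : ringOfInt K) * α = 0 := by
      apply Subtype.ext
      push_cast
      linear_combination e'
    have h1 := (hind _ _ h0).1
    refine ⟨u, mul_right_cancel₀ hlz ?_⟩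
    linear_combination h1
  have hx0 : ∀ p : ℤ, (ℓ : ℤ) ^ a ∣ p → p • π (1 / (ℓ : K) ^ a) = 0 := by
    rintro p ⟨k, rfl⟩
    rw [← map_zsmul, hπ0]
    have : ((ℓ : ℤ) ^ a * k) • (1 / (ℓ : K) ^ a) = ((k : ringOfInt K) : K) := by
      rw [zsmul_eq_mul]; push_cast; field_simp
    rw [this]; exact Subtype.property _
  constructor
  · rintro m - i - ⟨y, ⟨y', hy', rfl⟩, h⟩
    obtain ⟨z, hz, rfl⟩ := (hinv y').1 hy'
    obtain ⟨u, v, rfl⟩ := hspp z hz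
    refine ⟨u, ?_⟩
    rw [← sub_eq_zero, ← sub_smul]
    apply hx0
    rw [← sub_eq_zero, ← map_zsmul, ← map_zsmul, ← map_sub, hπ0] at h
    apply key _ (-(ℓ ^ i * v))
    convert h using 1
    simp only [zsmul_eq_mul]
    push_cast
    field_simp
    ring
  · have hCP : π ((α : K) / (ℓ : K) ^ (a + 1)) ∈
        (invPow 𝔭 (2 * (a + 1) - 1)).map π := ⟨_, (hinv _).2 ⟨α, hα, rfl⟩, rfl⟩
    have hxP : π (1 / (ℓ : K) ^ a) ∈ (invPow 𝔭 (2 * (a + 1) - 1)).map π := by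
      refine ⟨_, (hinv _).2 ⟨ℓ, ?_, ?_⟩, rfl⟩
      · exact Ideal.pow_le_self (two_ne_zero) (hram ▸ Ideal.mem_span_singleton_self _)
      · push_cast; field_simp; ring
    refine ⟨AddSubgroup.zmultiples (π ((α : K) / (ℓ : K) ^ (a + 1))), ?_, ?_, ?_⟩
    · rwa [AddSubgroup.zmultiples_le]
    · rw [eq_bot_iff]
      rintro t ⟨⟨p, hp⟩, ⟨q, hq⟩⟩
      simp only at hp hq
      rw [AddSubgroup.mem_bot, ← hp]
      apply hx0
      have h := hp.trans hq.symm
      rw [← sub_eq_zero, ← map_zsmul, ← map_zsmul, ← map_sub, hπ0] at h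
      apply key _ (-q)
      convert h using 1
      simp only [zsmul_eq_mul]
      push_cast
      field_simp
      ring
    · apply le_antisymm
      · rw [sup_le_iff, AddSubgroup.zmultiples_le, AddSubgroup.zmultiples_le]
        exact ⟨hxP, hCP⟩
      · rintro _ ⟨y', hy', rfl⟩
        obtain ⟨z, hz, rfl⟩ := (hinv y').1 hy'
        obtain ⟨u, v, rfl⟩ := hspp z hz
        refine AddSubgroup.mem_sup.2 ⟨u • π (1 / (ℓ : K) ^ a), ⟨u, rfl⟩,
          v • π ((α : K) / (ℓ : K) ^ (a + 1)), ⟨v, rfl⟩, ?_⟩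
        rw [← map_zsmul, ← map_zsmul, ← map_add]
        congr 1
        simp only [zsmul_eq_mul]
        push_cast
        field_simp
        ring
end
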